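/- Fix a ∈ ℝ and let (Φ, W, Ψ, θ) be a solution of system (D) defined for all τ ∈ ℝ with Φ(τ) > 0 and θ(τ) ∈ (−π/2, π/2) for all τ. Suppose liminf_{τ→−∞} Φ(τ) < ∞ and limsup_{τ→−∞} ( Φ(τ) + |W(τ)| + |Ψ(τ)| ) = ∞. Then limsup_{τ→−∞} Φ(τ) = ∞. -/

import Mathlib

open Filter Set

/-- The right-hand side of the `Ψ` equation in system (D). -/
noncomputable def dPsi (a Φ W Ψ θ : ℝ) : ℝ :=
  1 / Φ ^ 3 - 1 - (a - 1) * Real.cos θ ^ 2 -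
    (((16 / 3) * Real.sin θ - (224 / 27) * Real.sin θ ^ 3) * Real.cos θ ^ ((17 : ℝ) / 3) * Φ
      + ((208 / 81) * Real.sin θ ^ 2 - 10 / 9) * Real.cos θ ^ ((34 : ℝ) / 9) * W
      + (2 / 3) * Real.sin θ * Real.cos θ ^ ((17 : ℝ) / 9) * Ψ)

/-- `(Φ, W, Ψ, θ)` is a solution of system (D) on all of `ℝ`. -/
noncomputable def SolD (a : ℝ) (Φ W Ψ θ : ℝ → ℝ) : Prop :=
  ∀ τ : ℝ,
    HasDerivAt Φ (W τ) τ ∧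
    HasDerivAt W (Ψ τ) τ ∧
    HasDerivAt Ψ (dPsi a (Φ τ) (W τ) (Ψ τ) (θ τ)) τ ∧
    HasDerivAt θ (Real.cos (θ τ) ^ ((26 : ℝ) / 9)) τ

open Asymptotics

/-!
If `Φ` stays bounded, so do `W` and `Ψ`. Collecting derivatives, the third equation becomes
`(Ψ + γ W + δ Φ)' = 1 / Φ ^ 3 + O(1)`, where `γ` and `δ` are functions of `θ`; although `1 / Φ ^ 3`
is not controlled from above, it is nonnegative. By the mean value theorem, boundedness of `Φ`
yields, in every interval of a fixed length, points where `W + γ Φ` and then `Ψ + γ W + δ Φ` are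
under control. A function with such points on both sides of every time and with derivative bounded
below is bounded, so this holds for `Ψ + γ W + δ Φ`, and then for `W + γ Φ`.
-/

section Asymptotics

variable {α : Type*} {l : Filter α}

lemma isBigO_one_mul {f g : α → ℝ} (hf : f =O[l] fun _ => (1 : ℝ))
    (hg : g =O[l] fun _ => (1 : ℝ)) : (fun t => f t * g t) =O[l] fun _ => (1 : ℝ) := by
  simpa only [mul_one] using hf.mul hg

lemma isBigO_one_iff_isBoundedUnder_le_and_ge {f : α → ℝ} :
    (f =O[l] fun _ => (1 : ℝ)) ↔
      l.IsBoundedUnder (· ≤ ·) f ∧ l.IsBoundedUnder (· ≥ ·) f :=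
  (isBigO_one_iff ℝ).trans isBoundedUnder_le_abs

lemma isBigO_one_comp_of_isCompact {X : Type*} [TopologicalSpace X] {K : Set X}
    {k : X → ℝ} (hk : ContinuousOn k K) (hK : IsCompact K) {θ : α → X} (hθ : ∀ᶠ t in l, θ t ∈ K) :
    (fun t => k (θ t)) =O[l] fun _ => (1 : ℝ) :=
  (hk.isBigO_principal hK (by simp)).comp_tendsto (tendsto_principal.2 hθ)

lemma limsup_coe_lt_top_iff_isBoundedUnder {u : α → ℝ} :
    limsup (fun t => (u t : EReal)) l < ⊤ ↔ l.IsBoundedUnder (· ≤ ·) u := by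
  constructor
  · intro h
    obtain ⟨C, hC, -⟩ := EReal.lt_iff_exists_real_btwn.1 h
    exact ⟨C, eventually_map.2 <| (eventually_lt_of_limsup_lt hC).mono fun _ ht =>
      (EReal.coe_lt_coe_iff.1 ht).le⟩
  · rintro ⟨C, hC⟩
    exact (limsup_le_of_le (by isBoundedDefault)
      ((eventually_map.1 hC).mono fun _ ht => EReal.coe_le_coe ht)).trans_lt (EReal.coe_lt_top C)

end Asymptotics

lemma mul_sub_le_sub_of_le_hasDerivAt {f f' : ℝ → ℝ} {C x y : ℝ} (hxy : x ≤ y)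
    (hf : ∀ t ∈ Icc x y, HasDerivAt f (f' t) t) (hC : ∀ t ∈ Icc x y, C ≤ f' t) :
    C * (y - x) ≤ f y - f x := by
  refine (convex_Icc x y).mul_sub_le_image_sub_of_le_deriv
    (fun t ht => (hf t ht).continuousAt.continuousWithinAt)
    (fun t ht => (hf t (interior_subset ht)).differentiableAt.differentiableWithinAt)
    (fun t ht => ?_) x (left_mem_Icc.2 hxy) y (right_mem_Icc.2 hxy) hxy
  rw [(hf t (interior_subset ht)).deriv]
  exact hC t (interior_subset ht)

/-- `f` is bounded on a subset of `ℝ` that is relatively dense near `-∞`, i.e. that meets every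
interval of some fixed length `ℓ` lying sufficiently far to the left. -/
def BoundedOnRelDense (f : ℝ → ℝ) : Prop :=
  ∃ ℓ > 0, ∃ C, ∀ᶠ u in atBot, ∃ t ∈ Icc u (u + ℓ), |f t| ≤ C

namespace BoundedOnRelDense

variable {f f' g : ℝ → ℝ}

lemma of_isBigO_one (hf : f =O[atBot] fun _ => (1 : ℝ)) :
    BoundedOnRelDense f := by
  obtain ⟨C, hC⟩ := (isBigO_one_iff ℝ).1 hf
  exact ⟨1, one_pos, C, (eventually_map.1 hC).mono fun u hu => ⟨u, ⟨le_rfl, by simp⟩, hu⟩⟩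

lemma sub_isBigO_one (hf : BoundedOnRelDense f) (hg : g =O[atBot] fun _ => (1 : ℝ)) :
    BoundedOnRelDense fun t => f t - g t := by
  obtain ⟨ℓ, hℓ, C, hC⟩ := hf
  obtain ⟨D, hD⟩ := (isBigO_one_iff ℝ).1 hg
  refine ⟨ℓ, hℓ, C + D, ?_⟩
  filter_upwards [hC, (tendsto_atBot_add_const_right _ ℓ tendsto_id).eventually_forall_le_atBot
    (eventually_map.1 hD)] with u ⟨t, ht, hft⟩ hgu
  exact ⟨t, ht, (abs_sub _ _).trans (add_le_add hft (hgu t ht.2))⟩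

/-- The mean value theorem between control points of `f` in the outer thirds of an interval. -/
lemma of_hasDerivAt (hf : BoundedOnRelDense f) (hf' : ∀ᶠ t in atBot, HasDerivAt f (f' t) t) :
    BoundedOnRelDense f' := by
  obtain ⟨ℓ, hℓ, C, hC⟩ := hf
  refine ⟨3 * ℓ, by positivity, (C + C) / ℓ, ?_⟩
  filter_upwards [hC,
    (tendsto_atBot_add_const_right _ (2 * ℓ) tendsto_id).eventually hC,
    (tendsto_atBot_add_const_right _ (3 * ℓ) tendsto_id).eventually_forall_le_atBot hf']
    with u ⟨x, hx, hfx⟩ ⟨y, hy, hfy⟩ hderiv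
  simp only [id, mem_Icc] at hx hy hderiv
  have hgap : ℓ ≤ y - x := by linarith
  obtain ⟨ξ, hξ, hslope⟩ := exists_hasDerivAt_eq_slope f f' (show x < y by linarith)
    (fun t ht => (hderiv t (by linarith [ht.2])).continuousAt.continuousWithinAt)
    (fun t ht => hderiv t (by linarith [ht.2]))
  refine ⟨ξ, ⟨by linarith [hξ.1], by linarith [hξ.2]⟩, ?_⟩
  have hC0 : 0 ≤ C := (abs_nonneg _).trans hfx
  calc |f' ξ| = |f y - f x| / (y - x) := by rw [hslope, abs_div, abs_of_pos (hℓ.trans_le hgap)]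
    _ ≤ (C + C) / ℓ := by gcongr; exact (abs_sub _ _).trans (add_le_add hfy hfx)

lemma isBigO_one_of_hasDerivAt (hf : BoundedOnRelDense f)
    (hf' : ∀ᶠ t in atBot, HasDerivAt f (f' t) t)
    (hbelow : atBot.IsBoundedUnder (· ≥ ·) f') : f =O[atBot] fun _ => (1 : ℝ) := by
  obtain ⟨ℓ, hℓ, C, hC⟩ := hf
  obtain ⟨B, hB⟩ := hbelow
  refine (isBigO_one_iff ℝ).2 ⟨C + |B| * ℓ, eventually_map.2 ?_⟩
  filter_upwards [hC, (tendsto_atBot_add_const_right _ (-ℓ) tendsto_id).eventually hC,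
    (tendsto_atBot_add_const_right _ ℓ tendsto_id).eventually_forall_le_atBot
      (hf'.and (eventually_map.1 hB))] with u ⟨y, hy, hfy⟩ ⟨x, hx, hfx⟩ hderiv
  simp only [id, mem_Icc, neg_add_cancel_right] at hx hy hderiv
  have drop_le : ∀ s t, s ≤ t → t ≤ s + ℓ → t ≤ u + ℓ → f s - |B| * ℓ ≤ f t := by
    intro s t hst hts ht
    have hmvt := mul_sub_le_sub_of_le_hasDerivAt (C := -|B|) hst
      (fun r hr => (hderiv r (hr.2.trans ht)).1)
      (fun r hr => (neg_abs_le B).trans (hderiv r (hr.2.trans ht)).2)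
    have : |B| * (t - s) ≤ |B| * ℓ := by gcongr; linarith
    linarith
  have hlower := drop_le x u hx.2 (by linarith) (by linarith)
  have hupper := drop_le u y hy.1 hy.2 hy.2
  rw [abs_le] at hfx hfy
  exact abs_le.2 ⟨by linarith, by linarith⟩

end BoundedOnRelDense

theorem isBigO_one_of_quasiDeriv {f g h h' b c : ℝ → ℝ}
    (hf : ∀ᶠ t in atBot, HasDerivAt f (g t + b t) t)
    (hg : ∀ᶠ t in atBot, HasDerivAt g (h t + c t) t)
    (hh : ∀ᶠ t in atBot, HasDerivAt h (h' t) t)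
    (hfO : f =O[atBot] fun _ => (1 : ℝ)) (hbO : b =O[atBot] fun _ => (1 : ℝ))
    (hcO : c =O[atBot] fun _ => (1 : ℝ)) (hbelow : atBot.IsBoundedUnder (· ≥ ·) h') :
    (g =O[atBot] fun _ => (1 : ℝ)) ∧ h =O[atBot] fun _ => (1 : ℝ) := by
  have hg_dense : BoundedOnRelDense g := by
    simpa only [add_sub_cancel_right] using
      ((BoundedOnRelDense.of_isBigO_one hfO).of_hasDerivAt hf).sub_isBigO_one hbO
  have hh_dense : BoundedOnRelDense h := by
    simpa only [add_sub_cancel_right] using (hg_dense.of_hasDerivAt hg).sub_isBigO_one hcO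
  have hhO := hh_dense.isBigO_one_of_hasDerivAt hh hbelow
  exact ⟨hg_dense.isBigO_one_of_hasDerivAt hg
    (isBigO_one_iff_isBoundedUnder_le_and_ge.1 (hhO.add hcO)).2, hhO⟩

theorem isBigO_one_of_thirdOrder_ge {f v w j p p' q q' : ℝ → ℝ}
    (hf : ∀ᶠ t in atBot, HasDerivAt f (v t) t)
    (hv : ∀ᶠ t in atBot, HasDerivAt v (w t) t)
    (hw : ∀ᶠ t in atBot, HasDerivAt w (j t) t)
    (hp : ∀ᶠ t in atBot, HasDerivAt p (p' t) t)
    (hq : ∀ᶠ t in atBot, HasDerivAt q (q' t) t)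
    (hpO : p =O[atBot] fun _ => (1 : ℝ)) (hp'O : p' =O[atBot] fun _ => (1 : ℝ))
    (hqO : q =O[atBot] fun _ => (1 : ℝ)) (hq'O : q' =O[atBot] fun _ => (1 : ℝ))
    (hfO : f =O[atBot] fun _ => (1 : ℝ))
    (hbelow : atBot.IsBoundedUnder (· ≥ ·) fun t => j t + p t * w t + (q t + p' t) * v t) :
    (v =O[atBot] fun _ => (1 : ℝ)) ∧ w =O[atBot] fun _ => (1 : ℝ) := by
  have hpf := isBigO_one_mul hpO hfO
  have hqf := isBigO_one_mul hqO hfO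
  obtain ⟨hgO, hhO⟩ := isBigO_one_of_quasiDeriv
    (f := f) (g := fun t => v t + p t * f t) (h := fun t => w t + p t * v t + q t * f t)
    (h' := fun t => (j t + p t * w t + (q t + p' t) * v t) + q' t * f t)
    (b := fun t => -(p t * f t)) (c := fun t => (p' t - q t) * f t)
    (by filter_upwards [hf] with t hft using hft.congr_deriv (by ring))
    (by filter_upwards [hf, hv, hp] with t hft hvt hpt using
          (hvt.add (hpt.mul hft)).congr_deriv (by ring))
    (by filter_upwards [hf, hv, hw, hp, hq] with t hft hvt hwt hpt hqt using
          ((hwt.add (hpt.mul hvt)).add (hqt.mul hft)).congr_deriv (by ring))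
    hfO hpf.neg_left (isBigO_one_mul (hp'O.sub hqO) hfO)
    (isBoundedUnder_ge_add hbelow
      (isBigO_one_iff_isBoundedUnder_le_and_ge.1 (isBigO_one_mul hq'O hfO)).2)
  have hvO : v =O[atBot] fun _ => (1 : ℝ) := by
    simpa only [add_sub_cancel_right] using hgO.sub hpf
  refine ⟨hvO, ?_⟩
  simpa only [add_sub_cancel_right] using (hhO.sub hqf).sub (isBigO_one_mul hpO hvO)

namespace SolD

/-- `(Φ, W, Ψ, θ)` satisfies the equations of system (D) at the time `τ`. Stating the system
pointwise allows solutions that exist only near `-∞`. -/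
def At (a : ℝ) (Φ W Ψ θ : ℝ → ℝ) (τ : ℝ) : Prop :=
  HasDerivAt Φ (W τ) τ ∧
  HasDerivAt W (Ψ τ) τ ∧
  HasDerivAt Ψ (dPsi a (Φ τ) (W τ) (Ψ τ) (θ τ)) τ ∧
  HasDerivAt θ (Real.cos (θ τ) ^ ((26 : ℝ) / 9)) τ

/-- The coefficient `α` of `Φ` in the third equation of (D). -/
noncomputable def coeffΦ (x : ℝ) : ℝ :=
  ((16 / 3) * Real.sin x - (224 / 27) * Real.sin x ^ 3) * Real.cos x ^ ((17 : ℝ) / 3)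

/-- The coefficient `γ` of `Ψ` in the third equation of (D). -/
noncomputable def coeffΨ (x : ℝ) : ℝ :=
  (2 / 3) * Real.sin x * Real.cos x ^ ((17 : ℝ) / 9)

/-- The derivative `γ̇` of the coefficient `γ` of `Ψ` along `θ' = (cos θ) ^ (26 / 9)`. -/
noncomputable def coeffΨDot (x : ℝ) : ℝ :=
  Real.cos x ^ ((34 : ℝ) / 9) * (52 / 27 * Real.cos x ^ 2 - 34 / 27)

/-- The part `δ = β - γ̇` of the coefficient `β` of `W` in the third equation of (D) that is left
after `γ Ψ + γ̇ W` is combined into the derivative of `γ W`. -/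
noncomputable def coeffRem (x : ℝ) : ℝ :=
  Real.cos x ^ ((34 : ℝ) / 9) * (220 / 81 - 364 / 81 * Real.cos x ^ 2)

lemma dPsi_eq (a φ w ψ x : ℝ) :
    dPsi a φ w ψ x = 1 / φ ^ 3 - 1 - (a - 1) * Real.cos x ^ 2 -
      (coeffΦ x * φ + (coeffRem x + coeffΨDot x) * w + coeffΨ x * ψ) := by
  simp only [dPsi, coeffΦ, coeffΨ, coeffΨDot, coeffRem, Real.sin_sq]
  ring

lemma continuous_coeffΦ : Continuous coeffΦ :=
  (by fun_prop : Continuous fun x : ℝ =>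
    (16 / 3) * Real.sin x - (224 / 27) * Real.sin x ^ 3).mul
    (Real.continuous_cos.rpow_const fun _ => Or.inr (by norm_num))

lemma continuous_coeffΨ : Continuous coeffΨ :=
  (Real.continuous_sin.const_mul _).mul
    (Real.continuous_cos.rpow_const fun _ => Or.inr (by norm_num))

lemma continuous_coeffΨDot : Continuous coeffΨDot :=
  (Real.continuous_cos.rpow_const fun _ => Or.inr (by norm_num)).mul (by fun_prop)

lemma contDiff_coeffRem : ContDiff ℝ 1 coeffRem :=
  (Real.contDiff_cos.rpow_const_of_le (by norm_num)).mul
    (contDiff_const.sub (contDiff_const.mul (Real.contDiff_cos.pow 2)))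

lemma hasDerivAt_coeffΨ_comp {θ : ℝ → ℝ} {t : ℝ} (hcos : 0 ≤ Real.cos (θ t))
    (hθ : HasDerivAt θ (Real.cos (θ t) ^ ((26 : ℝ) / 9)) t) :
    HasDerivAt (fun s => coeffΨ (θ s)) (coeffΨDot (θ t)) t := by
  refine ((hθ.sin.const_mul (2 / 3 : ℝ)).mul
    (hθ.cos.rpow_const (p := (17 : ℝ) / 9) (Or.inr (by norm_num)))).congr_deriv ?_
  have h34 : Real.cos (θ t) ^ ((34 : ℝ) / 9) =
      Real.cos (θ t) ^ ((26 : ℝ) / 9) * Real.cos (θ t) ^ ((17 : ℝ) / 9 - 1) := by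
    rw [← Real.rpow_add_of_nonneg hcos (by norm_num) (by norm_num)]; norm_num
  have h17 : Real.cos (θ t) ^ ((17 : ℝ) / 9) =
      Real.cos (θ t) ^ ((17 : ℝ) / 9 - 1) * Real.cos (θ t) := by
    rw [← Real.rpow_add_one' hcos (by norm_num)]; norm_num
  rw [coeffΨDot, h34, h17]
  linear_combination (-(2 / 3) * (17 / 9) * Real.cos (θ t) ^ ((26 : ℝ) / 9) *
    Real.cos (θ t) ^ ((17 : ℝ) / 9 - 1)) * Real.sin_sq (θ t)

lemma hasDerivAt_coeffRem_comp {θ : ℝ → ℝ} {t : ℝ}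
    (hθ : HasDerivAt θ (Real.cos (θ t) ^ ((26 : ℝ) / 9)) t) :
    HasDerivAt (fun s => coeffRem (θ s))
      (deriv coeffRem (θ t) * Real.cos (θ t) ^ ((26 : ℝ) / 9)) t :=
  (contDiff_coeffRem.differentiable one_ne_zero _).hasDerivAt.comp t hθ

section Solution

variable {a : ℝ} {Φ W Ψ θ : ℝ → ℝ}

lemma isBoundedUnder_ge_forcing (hΦpos : ∀ᶠ τ in atBot, 0 < Φ τ)
    (hθ : ∀ᶠ τ in atBot, θ τ ∈ Icc (-(Real.pi / 2)) (Real.pi / 2))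
    (hΦO : Φ =O[atBot] fun _ => (1 : ℝ)) :
    atBot.IsBoundedUnder (· ≥ ·) fun τ => dPsi a (Φ τ) (W τ) (Ψ τ) (θ τ) +
      coeffΨ (θ τ) * Ψ τ + (coeffRem (θ τ) + coeffΨDot (θ τ)) * W τ := by
  have hcos : Continuous fun x => -1 - (a - 1) * Real.cos x ^ 2 := by fun_prop
  have hO := (isBigO_one_comp_of_isCompact hcos.continuousOn isCompact_Icc hθ).sub
    (isBigO_one_mul
      (isBigO_one_comp_of_isCompact continuous_coeffΦ.continuousOn isCompact_Icc hθ) hΦO)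
  refine (isBigO_one_iff_isBoundedUnder_le_and_ge.1 hO).2.mono_ge ?_
  filter_upwards [hΦpos] with τ hτ
  have hsingular : 0 ≤ 1 / Φ τ ^ 3 := by positivity
  rw [dPsi_eq]
  linarith

theorem isBigO_one_W_and_Ψ (hsol : ∀ᶠ τ in atBot, At a Φ W Ψ θ τ)
    (hΦpos : ∀ᶠ τ in atBot, 0 < Φ τ)
    (hθ : ∀ᶠ τ in atBot, θ τ ∈ Icc (-(Real.pi / 2)) (Real.pi / 2))
    (hΦO : Φ =O[atBot] fun _ => (1 : ℝ)) :
    (W =O[atBot] fun _ => (1 : ℝ)) ∧ Ψ =O[atBot] fun _ => (1 : ℝ) := by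
  have coeff_isBigO {k : ℝ → ℝ} (hk : Continuous k) :
      (fun τ => k (θ τ)) =O[atBot] fun _ => (1 : ℝ) :=
    isBigO_one_comp_of_isCompact hk.continuousOn isCompact_Icc hθ
  refine isBigO_one_of_thirdOrder_ge (hsol.mono fun _ h => h.1) (hsol.mono fun _ h => h.2.1)
    (hsol.mono fun _ h => h.2.2.1) ?_
    (hsol.mono fun _ h => hasDerivAt_coeffRem_comp h.2.2.2)
    (coeff_isBigO continuous_coeffΨ) (coeff_isBigO continuous_coeffΨDot)
    (coeff_isBigO contDiff_coeffRem.continuous)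
    (coeff_isBigO ((contDiff_coeffRem.continuous_deriv le_rfl).mul
      (Real.continuous_cos.rpow_const fun _ => Or.inr (by norm_num))))
    hΦO (isBoundedUnder_ge_forcing hΦpos hθ hΦO)
  filter_upwards [hsol, hθ] with τ h hτ using
    hasDerivAt_coeffΨ_comp (Real.cos_nonneg_of_mem_Icc hτ) h.2.2.2

end Solution

end SolD

theorem limsup_top_general {a : ℝ} {Φ W Ψ θ : ℝ → ℝ}
    (hsol : ∀ᶠ τ in atBot, SolD.At a Φ W Ψ θ τ)
    (hΦpos : ∀ᶠ τ in atBot, 0 < Φ τ)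
    (hθ : ∀ᶠ τ in atBot, θ τ ∈ Icc (-(Real.pi / 2)) (Real.pi / 2))
    (hlimsup : limsup (fun τ => ((Φ τ + |W τ| + |Ψ τ| : ℝ) : EReal)) atBot = ⊤) :
    limsup (fun τ => (Φ τ : EReal)) atBot = ⊤ := by
  rw [← not_lt_top_iff, limsup_coe_lt_top_iff_isBoundedUnder] at hlimsup ⊢
  contrapose hlimsup
  have hΦO : Φ =O[atBot] fun _ => (1 : ℝ) := isBigO_one_iff_isBoundedUnder_le_and_ge.2
    ⟨hlimsup, 0, eventually_map.2 (hΦpos.mono fun _ h => h.le)⟩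
  obtain ⟨hWO, hΨO⟩ := SolD.isBigO_one_W_and_Ψ hsol hΦpos hθ hΦO
  exact (isBigO_one_iff_isBoundedUnder_le_and_ge.1
    ((hΦO.add hWO.abs_left).add hΨO.abs_left)).1

/-- `limsup_{τ→-∞} Φ = ∞`. -/
theorem limsup_top (a : ℝ) (Φ W Ψ θ : ℝ → ℝ)
    (hsol : SolD a Φ W Ψ θ)
    (hΦpos : ∀ τ : ℝ, 0 < Φ τ)
    (hθ : ∀ τ : ℝ, θ τ ∈ Set.Ioo (-(Real.pi / 2)) (Real.pi / 2))
    (hliminf : Filter.liminf (fun τ : ℝ => ((Φ τ : ℝ) : EReal)) atBot < ⊤)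
    (hlimsup : Filter.limsup (fun τ : ℝ => ((Φ τ + |W τ| + |Ψ τ| : ℝ) : EReal)) atBot = ⊤) :
    Filter.limsup (fun τ : ℝ => ((Φ τ : ℝ) : EReal)) atBot = ⊤ :=
  limsup_top_general (.of_forall hsol) (.of_forall hΦpos)
    (.of_forall fun τ => Ioo_subset_Icc_self (hθ τ)) hlimsup
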